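/- arXiv:2008.03690 — 10 statements merged into one kernel-verified Lean document; each statement's English description precedes it below -/
import Mathlib

section
/- Let M be a complete residuated multilattice, (X,R) an M-fuzzy approximation space and f : X → M. Then (R̄(f))* = R_(f*), R_(f) ≤ (R̄(f*))*, and R̄(f) ≤ (R_(f*))* (all inequalities pointwise on X). -/
/-!
The star operation is an antitone Galois connection with itself: `a ≤ b*` iff `a ⊙ b ≤ ⊥` iff
`b ≤ a*` (`le_starM_comm`). Combined with `a ≤ (r ⊙ b)* ↔ a ≤ r → b*` (`le_starM_odot`), this
shows that `(R̄ f)*` and `R_ (f*)` have the same lower bounds, hence are equal.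
The two inequalities follow from this equality and `a ≤ a**`:
`R_ f ≤ R_ (f**) = (R̄ (f*))*` and `R̄ f ≤ (R̄ f)** = (R_ (f*))*`.
-/

/-- A complete residuated multilattice: a pocrim (commutative monoid with neutral
element `top`, partially ordered with greatest element `top`, satisfying the
adjointness condition) with a least element `bot`, whose underlying poset is a
complete multilattice (every subset has at least one minimal upper bound and at
least one maximal lower bound). -/
class CompleteResiduatedMultilattice (M : Type*) extends PartialOrder M where
  odot : M → M → M
  himp : M → M → M
  top : M
  bot : M
  odot_comm : ∀ a b : M, odot a b = odot b a
  odot_assoc : ∀ a b c : M, odot (odot a b) c = odot a (odot b c)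
  odot_top : ∀ a : M, odot a top = a
  le_top : ∀ a : M, a ≤ top
  bot_le : ∀ a : M, bot ≤ a
  adjoint : ∀ a b c : M, odot a b ≤ c ↔ a ≤ himp b c
  exists_minimal_upperBound : ∀ X : Set M, ∃ m : M, Minimal (· ∈ upperBounds X) m
  exists_maximal_lowerBound : ∀ X : Set M, ∃ m : M, Maximal (· ∈ lowerBounds X) m

namespace CompleteResiduatedMultilattice

variable {M : Type*} [CompleteResiduatedMultilattice M]

/-- The set `⊔X` of multisuprema of `X`: minimal elements of the set of upper bounds. -/
def MSup (X : Set M) : Set M := {m | Minimal (· ∈ upperBounds X) m}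

/-- The set `⊓X` of multiinfima of `X`: maximal elements of the set of lower bounds. -/
def MInf (X : Set M) : Set M := {m | Maximal (· ∈ lowerBounds X) m}

/-- `a* := a → ⊥`. -/
def starM (a : M) : M := himp a bot

/-- Upper closure `↑S`. -/
def upClo (S : Set M) : Set M := {m | ∃ s ∈ S, s ≤ m}

/-- Lower closure `↓S`. -/
def lowClo (S : Set M) : Set M := {m | ∃ s ∈ S, m ≤ s}

end CompleteResiduatedMultilattice

open CompleteResiduatedMultilattice

namespace CompleteResiduatedMultilattice

theorem le_starM_iff {M : Type*} [CompleteResiduatedMultilattice M] (a b : M) :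
    a ≤ starM b ↔ odot a b ≤ bot :=
  (adjoint a b bot).symm

/-- Star is an antitone Galois connection with itself. -/
theorem le_starM_comm {M : Type*} [CompleteResiduatedMultilattice M] (a b : M) :
    a ≤ starM b ↔ b ≤ starM a := by
  rw [le_starM_iff, le_starM_iff, odot_comm]

theorem le_starM_starM {M : Type*} [CompleteResiduatedMultilattice M] (a : M) :
    a ≤ starM (starM a) :=
  (le_starM_comm _ _).1 le_rfl

theorem himp_mono_right {M : Type*} [CompleteResiduatedMultilattice M] (a : M) {b c : M}
    (h : b ≤ c) : himp a b ≤ himp a c :=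
  (adjoint _ _ _).1 (((adjoint _ _ _).2 le_rfl).trans h)

/-- The identity `(r ⊙ b)* = r → b*`, in terms of lower bounds. -/
theorem le_starM_odot {M : Type*} [CompleteResiduatedMultilattice M] (a r b : M) :
    a ≤ starM (odot r b) ↔ a ≤ himp r (starM b) := by
  rw [← adjoint, le_starM_iff, le_starM_iff, odot_assoc]

end CompleteResiduatedMultilattice

/-- `(R̄ f)* = R_ (f*)`, `R_ f ≤ (R̄ (f*))*` and `R̄ f ≤ (R_ (f*))*` (pointwise),
where `lo` and `up` are the lower and upper `M`-fuzzy rough approximators of the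
`M`-fuzzy approximation space `(X, R)`. -/
theorem star_approx {M : Type*} [CompleteResiduatedMultilattice M]
    {X : Type*} [Nonempty X] (R : X → X → M)
    (lo up : (X → M) → X → M)
    (hlo : ∀ f x, IsGLB (Set.range fun y => himp (R x y) (f y)) (lo f x))
    (hup : ∀ f x, IsLUB (Set.range fun y => odot (R x y) (f y)) (up f x))
    (f : X → M) :
    (∀ x, starM (up f x) = lo (fun y => starM (f y)) x) ∧
    (∀ x, lo f x ≤ starM (up (fun y => starM (f y)) x)) ∧
    (∀ x, up f x ≤ starM (lo (fun y => starM (f y)) x)) := by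
  have key : ∀ g x, starM (up g x) = lo (fun y => starM (g y)) x := by
    intro g x
    refine eq_of_forall_le_iff fun c => ?_
    rw [le_starM_comm, isLUB_le_iff (hup g x), le_isGLB_iff (hlo _ x)]
    simp only [mem_upperBounds, mem_lowerBounds, Set.forall_mem_range]
    refine forall_congr' fun y => ?_
    rw [le_starM_comm, le_starM_odot]
  refine ⟨key f, fun x => ?_, fun x => ?_⟩
  · rw [key, le_isGLB_iff (hlo _ x)]
    rintro _ ⟨y, rfl⟩
    exact ((hlo f x).1 ⟨y, rfl⟩).trans (himp_mono_right _ (le_starM_starM _))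
  · rw [← key]
    exact le_starM_starM _
end

section
/- Let M be a complete residuated multilattice and (X,R) an M-fuzzy approximation space. Then R is reflexive (i.e. R(x,x) = ⊤ for all x ∈ X) if and only if R_(f) ≤ f for every f : X → M (pointwise). -/
open CompleteResiduatedMultilattice

/-- `R` is reflexive iff `R_ f ≤ f` for every `f : X → M` (pointwise). -/
theorem reflexive_iff_lo_le {M : Type*} [CompleteResiduatedMultilattice M]
    {X : Type*} [Nonempty X] (R : X → X → M)
    (lo : (X → M) → X → M)
    (hlo : ∀ f x, IsGLB (Set.range fun y => himp (R x y) (f y)) (lo f x)) :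
    (∀ x, R x x = top) ↔ (∀ (f : X → M) (x : X), lo f x ≤ f x) := by
  constructor
  · intro h f x
    have h1 : lo f x ≤ himp (R x x) (f x) := (hlo f x).1 ⟨x, rfl⟩
    rw [h x, ← adjoint, odot_top] at h1
    exact h1
  · intro h x
    -- Test against `f = R x ·`: every `R x y → R x y` is `⊤`, so `⊤ ≤ lo f x ≤ R x x`.
    refine le_antisymm (le_top _) (le_trans ((hlo (R x) x).2 ?_) (h (R x) x))
    rintro _ ⟨y, rfl⟩
    change top ≤ himp (R x y) (R x y)
    rw [← adjoint, odot_comm, odot_top]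
end

section
/- Let M be a complete residuated multilattice and (X,R) an M-fuzzy approximation space. Then R is reflexive (i.e. R(x,x) = ⊤ for all x ∈ X) if and only if f ≤ R̄(f) for every f : X → M (pointwise). -/
open CompleteResiduatedMultilattice

/-- `R` is reflexive iff `f ≤ R̄ f` for every `f : X → M` (pointwise). -/
theorem reflexive_iff_le_up {M : Type*} [CompleteResiduatedMultilattice M]
    {X : Type*} [Nonempty X] (R : X → X → M)
    (up : (X → M) → X → M)
    (hup : ∀ f x, IsLUB (Set.range fun y => odot (R x y) (f y)) (up f x)) :
    (∀ x, R x x = top) ↔ (∀ (f : X → M) (x : X), f x ≤ up f x) := by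
  classical
  constructor
  · intro hR f x
    have h := (hup f x).1 ⟨x, rfl⟩
    simpa only [hR x, odot_comm top, odot_top] using h
  · intro h x
    -- Test the inequality on the indicator of `x`: its upper approximation at `x` is at most
    -- `R x x`, since `a ⊙ ⊥ = ⊥` by adjointness.
    let f : X → M := fun y => if y = x then top else bot
    have hub : up f x ≤ R x x := by
      refine (hup f x).2 ?_
      rintro _ ⟨y, rfl⟩
      by_cases hy : y = x
      · subst hy
        simp [f, odot_top]
      · simp only [f, if_neg hy]
        rw [odot_comm, adjoint]
        exact bot_le _
    have hx : (top : M) ≤ up f x := by simpa [f] using h f x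
    exact le_antisymm (le_top _) (hx.trans hub)
end

section
/- Let M be a complete residuated multilattice and (X,R) an M-fuzzy approximation space. Then R is symmetric (i.e. R(x,y) = R(y,x) for all x,y ∈ X) if and only if R̄(R_(f)) ≤ f for every f : X → M (pointwise). -/
open CompleteResiduatedMultilattice

/-- `R` is symmetric iff `R̄ (R_ f) ≤ f` for every `f : X → M` (pointwise). -/
theorem symmetric_iff_up_lo_le {M : Type*} [CompleteResiduatedMultilattice M]
    {X : Type*} [Nonempty X] (R : X → X → M)
    (lo up : (X → M) → X → M)
    (hlo : ∀ f x, IsGLB (Set.range fun y => himp (R x y) (f y)) (lo f x))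
    (hup : ∀ f x, IsLUB (Set.range fun y => odot (R x y) (f y)) (up f x)) :
    (∀ x y, R x y = R y x) ↔ (∀ (f : X → M) (x : X), up (lo f) x ≤ f x) := by
  constructor
  · intro hR f x
    refine (hup (lo f) x).2 ?_
    rintro _ ⟨y, rfl⟩
    have h : lo f y ≤ himp (R y x) (f x) := (hlo f y).1 ⟨x, rfl⟩
    rw [← adjoint, ← hR x y, odot_comm] at h
    exact h
  · intro h
    have key : ∀ x y, R x y ≤ R y x := by
      intro x y
      -- Test on the row `f = R y ·`, for which `lo f y = ⊤`.
      have htop : top ≤ lo (R y) y := by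
        refine (hlo (R y) y).2 ?_
        rintro _ ⟨z, rfl⟩
        rw [← adjoint, odot_comm, odot_top]
      have hx : odot (R x y) (lo (R y) y) ≤ R y x :=
        ((hup (lo (R y)) x).1 ⟨y, rfl⟩).trans (h (R y) x)
      rwa [le_antisymm (le_top _) htop, odot_top] at hx
    exact fun x y => le_antisymm (key x y) (key y x)
end

section
/- Let M be a complete residuated multilattice and (X,R) an M-fuzzy approximation space. Then R is symmetric (i.e. R(x,y) = R(y,x) for all x,y ∈ X) if and only if f ≤ R_(R̄(f)) for every f : X → M (pointwise). -/
open CompleteResiduatedMultilattice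

/-- Adjointness removes the implication from the lower approximation. Only the description of
`lo` as an infimum enters, so `up` is arbitrary here. -/
theorem le_lo_up_iff {M : Type*} [CompleteResiduatedMultilattice M]
    {X : Type*} (R : X → X → M) (lo up : (X → M) → X → M)
    (hlo : ∀ f x, IsGLB (Set.range fun y => himp (R x y) (f y)) (lo f x))
    (f : X → M) (x : X) :
    f x ≤ lo (up f) x ↔ ∀ y, odot (R x y) (f x) ≤ up f y := by
  rw [le_isGLB_iff (hlo (up f) x), mem_lowerBounds, Set.forall_mem_range]
  exact forall_congr' fun y => by rw [← adjoint, odot_comm]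

/-- `R` is symmetric iff `f ≤ R_ (R̄ f)` for every `f : X → M` (pointwise). -/
theorem symmetric_iff_le_lo_up {M : Type*} [CompleteResiduatedMultilattice M]
    {X : Type*} [Nonempty X] (R : X → X → M)
    (lo up : (X → M) → X → M)
    (hlo : ∀ f x, IsGLB (Set.range fun y => himp (R x y) (f y)) (lo f x))
    (hup : ∀ f x, IsLUB (Set.range fun y => odot (R x y) (f y)) (up f x)) :
    (∀ x y, R x y = R y x) ↔ (∀ (f : X → M) (x : X), f x ≤ lo (up f) x) := by
  simp only [le_lo_up_iff R lo up hlo]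
  constructor
  · intro hR f x y
    rw [hR x y]
    exact (hup f y).1 ⟨x, rfl⟩
  · intro h
    suffices key : ∀ x y, R x y ≤ R y x from fun x y => le_antisymm (key x y) (key y x)
    intro x y
    classical
    -- Test the hypothesis on the indicator function of `{x}`.
    let δ : X → M := fun z => if z = x then top else bot
    have hδ : up δ y ≤ R y x := by
      refine (hup δ y).2 ?_
      rintro _ ⟨z, rfl⟩
      by_cases hz : z = x
      · subst hz
        simp [δ, odot_top]
      · simp only [δ, if_neg hz]
        -- `R y z ⊙ ⊥ ≤ c` for every `c`, because it amounts to `⊥ ≤ R y z → c`.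
        rw [odot_comm, adjoint]
        exact CompleteResiduatedMultilattice.bot_le _
    have hx : R x y ≤ up δ y := by simpa [δ, odot_top] using h δ x y
    exact hx.trans hδ
end

section
/- Let M be a complete residuated multilattice and (X,R) an M-fuzzy approximation space. Then R is Euclidean (i.e. R(z,x)⊙R(z,y) ≤ R(x,y) for all x,y,z ∈ X) if and only if R̄(f) ≤ R_(R̄(f)) for every f : X → M (pointwise). -/
open CompleteResiduatedMultilattice

namespace CompleteResiduatedMultilattice

variable {M : Type*} [CompleteResiduatedMultilattice M]

theorem odot_le_odot_right {a b : M} (h : a ≤ b) (c : M) : odot a c ≤ odot b c :=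
  (adjoint a c _).2 (h.trans ((adjoint b c _).1 le_rfl))

theorem odot_bot_le (a b : M) : odot a bot ≤ b := by
  rw [odot_comm, adjoint]
  exact CompleteResiduatedMultilattice.bot_le _

end CompleteResiduatedMultilattice

/-- `R` is Euclidean iff `R̄ f ≤ R_ (R̄ f)` for every `f : X → M` (pointwise). -/
theorem euclidean_iff_up_le_lo_up {M : Type*} [CompleteResiduatedMultilattice M]
    {X : Type*} [Nonempty X] (R : X → X → M)
    (lo up : (X → M) → X → M)
    (hlo : ∀ f x, IsGLB (Set.range fun y => himp (R x y) (f y)) (lo f x))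
    (hup : ∀ f x, IsLUB (Set.range fun y => odot (R x y) (f y)) (up f x)) :
    (∀ x y z, odot (R z x) (R z y) ≤ R x y) ↔
      (∀ (f : X → M) (x : X), up f x ≤ lo (up f) x) := by
  classical
  constructor
  · intro h f x
    refine (hlo _ x).2 ?_
    rintro _ ⟨y, rfl⟩
    refine (hup f x).2 ?_
    rintro _ ⟨z, rfl⟩
    change odot (R x z) (f z) ≤ himp (R x y) (up f y)
    rw [← adjoint, odot_comm, ← odot_assoc]
    exact (odot_le_odot_right (h y z x) (f z)).trans ((hup f y).1 ⟨z, rfl⟩)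
  · intro h x y z
    -- the crisp indicator of `y`
    let f : X → M := fun w => if w = y then top else bot
    have hge : R z y ≤ up f z := by
      have := (hup f z).1 ⟨y, rfl⟩
      simpa [f, odot_top] using this
    have hle : up f x ≤ R x y := by
      refine (hup f x).2 ?_
      rintro _ ⟨w, rfl⟩
      by_cases hw : w = y
      · subst hw
        simp [f, odot_top]
      · simpa [f, hw] using odot_bot_le (R x w) (R x y)
    have key : up f z ≤ himp (R z x) (up f x) := (h f z).trans ((hlo (up f) z).1 ⟨x, rfl⟩)
    rw [odot_comm]
    exact ((adjoint _ _ _).2 (hge.trans key)).trans hle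
end

section
/- Let M be a complete residuated multilattice and (X,R) an M-fuzzy approximation space. Then R is Euclidean (i.e. R(z,x)⊙R(z,y) ≤ R(x,y) for all x,y,z ∈ X) if and only if R̄(R_(f)) ≤ R_(f) for every f : X → M (pointwise). -/
open CompleteResiduatedMultilattice

/-- `R` is Euclidean iff `R̄ (R_ f) ≤ R_ f` for every `f : X → M` (pointwise). -/
theorem euclidean_iff_up_lo_le_lo {M : Type*} [CompleteResiduatedMultilattice M]
    {X : Type*} [Nonempty X] (R : X → X → M)
    (lo up : (X → M) → X → M)
    (hlo : ∀ f x, IsGLB (Set.range fun y => himp (R x y) (f y)) (lo f x))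
    (hup : ∀ f x, IsLUB (Set.range fun y => odot (R x y) (f y)) (up f x)) :
    (∀ x y z, odot (R z x) (R z y) ≤ R x y) ↔
      (∀ (f : X → M) (x : X), up (lo f) x ≤ lo f x) := by
  constructor
  · intro hE f x
    refine (hup (lo f) x).2 ?_
    rintro _ ⟨y, rfl⟩
    refine (hlo f x).2 ?_
    rintro _ ⟨w, rfl⟩
    have h : lo f y ≤ himp (R y w) (f w) := (hlo f y).1 ⟨w, rfl⟩
    have h' : R y w ≤ himp (lo f y) (f w) := by
      rwa [← adjoint, odot_comm, adjoint]
    have key : odot (odot (R x y) (R x w)) (lo f y) ≤ f w :=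
      (adjoint _ _ _).2 ((hE y w x).trans h')
    rw [← adjoint]
    rwa [odot_assoc, odot_comm (lo f y), ← odot_assoc]
  · intro h x y z
    -- Test on the row `f = R x ·`, whose lower approximation at `x` is the top element.
    have htop : lo (R x) x = CompleteResiduatedMultilattice.top := by
      refine le_antisymm (CompleteResiduatedMultilattice.le_top _) ((hlo (R x) x).2 ?_)
      rintro _ ⟨w, rfl⟩
      rw [← adjoint, odot_comm, odot_top]
    have h1 : odot (R z x) (lo (R x) x) ≤ up (lo (R x)) z := (hup _ z).1 ⟨x, rfl⟩
    rw [htop, odot_top] at h1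
    have h2 : lo (R x) z ≤ himp (R z y) (R x y) := (hlo _ z).1 ⟨y, rfl⟩
    exact (adjoint _ _ _).2 (h1.trans ((h _ z).trans h2))
end

section
/- Let M be a complete residuated multilattice and (X,R) an M-fuzzy approximation space. Then the following are equivalent: (i) R is transitive (i.e. R(x,z)⊙R(z,y) ≤ R(x,y) for all x,y,z ∈ X); (ii) R_(f) ≤ R_(R_(f)) for every f : X → M; (iii) R̄(R̄(f)) ≤ R̄(f) for every f : X → M (all inequalities pointwise). -/
open CompleteResiduatedMultilattice

theorem crm_odot_mono_left {M : Type*} [CompleteResiduatedMultilattice M]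
    {a b : M} (c : M) (h : a ≤ b) : odot a c ≤ odot b c :=
  (adjoint _ _ _).2 (h.trans ((adjoint _ _ _).1 le_rfl))

theorem crm_odot_mono_right {M : Type*} [CompleteResiduatedMultilattice M]
    {a b : M} (c : M) (h : a ≤ b) : odot c a ≤ odot c b := by
  rw [odot_comm c a, odot_comm c b]
  exact crm_odot_mono_left c h

theorem crm_odot_bot_le {M : Type*} [CompleteResiduatedMultilattice M]
    (a c : M) : odot a bot ≤ c := by
  rw [odot_comm]
  exact (adjoint _ _ _).2 (CompleteResiduatedMultilattice.bot_le _)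

/-- `R` is transitive iff `R_ f ≤ R_ (R_ f)` for every `f`, iff
`R̄ (R̄ f) ≤ R̄ f` for every `f` (pointwise). -/
theorem transitive_iff {M : Type*} [CompleteResiduatedMultilattice M]
    {X : Type*} [Nonempty X] (R : X → X → M)
    (lo up : (X → M) → X → M)
    (hlo : ∀ f x, IsGLB (Set.range fun y => himp (R x y) (f y)) (lo f x))
    (hup : ∀ f x, IsLUB (Set.range fun y => odot (R x y) (f y)) (up f x)) :
    ((∀ x y z, odot (R x z) (R z y) ≤ R x y) ↔
      (∀ (f : X → M) (x : X), lo f x ≤ lo (lo f) x)) ∧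
    ((∀ x y z, odot (R x z) (R z y) ≤ R x y) ↔
      (∀ (f : X → M) (x : X), up (up f) x ≤ up f x)) := by
  have lo_le : ∀ f x y, lo f x ≤ himp (R x y) (f y) := fun f x y => (hlo f x).1 ⟨y, rfl⟩
  have le_lo : ∀ f x a, (∀ y, a ≤ himp (R x y) (f y)) → a ≤ lo f x := fun f x a h =>
    (hlo f x).2 (by rintro _ ⟨y, rfl⟩; exact h y)
  have le_up : ∀ f x y, odot (R x y) (f y) ≤ up f x := fun f x y => (hup f x).1 ⟨y, rfl⟩
  have up_le : ∀ f x a, (∀ y, odot (R x y) (f y) ≤ a) → up f x ≤ a := fun f x a h =>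
    (hup f x).2 (by rintro _ ⟨y, rfl⟩; exact h y)
  refine ⟨⟨fun hR f x => ?_, fun h x y z => ?_⟩, ⟨fun hR f x => ?_, fun h x y z => ?_⟩⟩
  · refine le_lo _ _ _ fun z => (adjoint _ _ _).1 (le_lo _ _ _ fun y => (adjoint _ _ _).1 ?_)
    rw [odot_assoc]
    exact (crm_odot_mono_right _ (hR x y z)).trans ((adjoint _ _ _).2 (lo_le f x y))
  · have htop : top ≤ lo (R x) x := le_lo _ _ _ fun t => (adjoint _ _ _).1 (by
      rw [odot_comm, odot_top])
    have hz := (adjoint _ _ _).2 ((htop.trans (h (R x) x)).trans (lo_le (lo (R x)) x z))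
    rw [odot_comm, odot_top] at hz
    exact (adjoint _ _ _).2 (hz.trans (lo_le (R x) z y))
  · refine up_le _ _ _ fun z => ?_
    -- Adjointness moves `R x z` to the right, so that the supremum `up f z` stands alone.
    rw [odot_comm]
    refine (adjoint _ _ _).2 (up_le _ _ _ fun y => (adjoint _ _ _).1 ?_)
    rw [odot_comm, ← odot_assoc]
    exact (crm_odot_mono_left _ (hR x y z)).trans (le_up f x y)
  · classical
    let f : X → M := fun t => if t = y then top else bot
    have hfx : up f x ≤ R x y := up_le _ _ _ fun t => by
      by_cases ht : t = y
      · simp [f, ht, odot_top]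
      · simpa [f, ht] using crm_odot_bot_le _ _
    have hfz : R z y ≤ up f z := by simpa [f, odot_top] using le_up f z y
    exact (crm_odot_mono_right _ hfz).trans ((le_up (up f) x z).trans ((h f x).trans hfx))
end

section
/- Let M be a complete residuated multilattice and (X,R) an M-fuzzy approximation space where R is an M-tolerance relation (reflexive, symmetric and transitive in the sense stated below for the first two; here tolerance means reflexive and symmetric, and the hypothesis additionally uses transitivity as in the paper: R is reflexive and transitive suffices). Precisely: if R is reflexive and transitive, then for every f : X → M, R_(R_(f)) = R_(f) ≤ f ≤ R̄(f) = R̄(R̄(f)) (pointwise). -/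
open CompleteResiduatedMultilattice

namespace CompleteResiduatedMultilattice

/-- Monotonicity of the product, which is not an axiom but follows from adjointness. -/
theorem odot_mono_left {M : Type*} [CompleteResiduatedMultilattice M] {a b : M} (h : a ≤ b)
    (c : M) : odot a c ≤ odot b c :=
  (adjoint _ _ _).2 (h.trans ((adjoint _ _ _).1 le_rfl))

end CompleteResiduatedMultilattice

/-- If `R` is reflexive and transitive then
`R_ (R_ f) = R_ f ≤ f ≤ R̄ f = R̄ (R̄ f)` (pointwise). -/
theorem tolerance_approx {M : Type*} [CompleteResiduatedMultilattice M]
    {X : Type*} [Nonempty X] (R : X → X → M)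
    (hrefl : ∀ x, R x x = top)
    (htrans : ∀ x y z, odot (R x z) (R z y) ≤ R x y)
    (lo up : (X → M) → X → M)
    (hlo : ∀ f x, IsGLB (Set.range fun y => himp (R x y) (f y)) (lo f x))
    (hup : ∀ f x, IsLUB (Set.range fun y => odot (R x y) (f y)) (up f x))
    (f : X → M) :
    (∀ x, lo (lo f) x = lo f x) ∧ (∀ x, lo f x ≤ f x) ∧
    (∀ x, f x ≤ up f x) ∧ (∀ x, up f x = up (up f) x) := by
  have lo_le : ∀ g x, lo g x ≤ g x := by
    intro g x
    have h : lo g x ≤ himp (R x x) (g x) := (hlo g x).1 ⟨x, rfl⟩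
    rwa [← adjoint, hrefl, odot_top] at h
  have le_up : ∀ g x, g x ≤ up g x := by
    intro g x
    have h : odot (R x x) (g x) ≤ up g x := (hup g x).1 ⟨x, rfl⟩
    rwa [hrefl, odot_comm, odot_top] at h
  refine ⟨fun x => le_antisymm (lo_le _ x) ?_, lo_le f, le_up f,
    fun x => le_antisymm (le_up _ x) ?_⟩
  · apply (hlo (lo f) x).2
    rintro _ ⟨y, rfl⟩
    refine (adjoint _ _ _).1 ((hlo f y).2 ?_)
    rintro _ ⟨z, rfl⟩
    have hz : lo f x ≤ himp (R x z) (f z) := (hlo f x).1 ⟨z, rfl⟩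
    refine (adjoint _ _ _).1 ?_
    rw [odot_assoc, odot_comm]
    refine (odot_mono_left (htrans x z y) _).trans ?_
    rwa [odot_comm, adjoint]
  · apply (hup (up f) x).2
    rintro _ ⟨y, rfl⟩
    -- Residuating by `R x y` turns the bound into one on `up f y` alone, so that the
    -- least-upper-bound property applies inside the product.
    change odot (R x y) (up f y) ≤ up f x
    rw [odot_comm, adjoint]
    apply (hup f y).2
    rintro _ ⟨z, rfl⟩
    refine (adjoint _ _ _).1 ?_
    rw [odot_comm, ← odot_assoc]
    exact (odot_mono_left (htrans x z y) _).trans ((hup f x).1 ⟨z, rfl⟩)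
end

section
/- Let M be a complete residuated multilattice and (X,R) an M-fuzzy approximation space where R is an M-equivalence relation (reflexive, symmetric and transitive). Then for every f : X → M, R̄(R_(f)) = R_(R_(f)) = R_(f) ≤ f ≤ R̄(f) = R̄(R̄(f)) = R_(R̄(f)) (pointwise). -/
open CompleteResiduatedMultilattice

namespace CompleteResiduatedMultilattice

variable {M : Type*} [CompleteResiduatedMultilattice M]

theorem odot_le_odot_left {a b : M} (h : a ≤ b) (c : M) : odot c a ≤ odot c b := by
  rw [odot_comm c a, odot_comm c b]
  exact odot_le_odot_right h c

end CompleteResiduatedMultilattice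

/-- If `R` is an `M`-equivalence relation (reflexive, symmetric, transitive) then
`R̄ (R_ f) = R_ (R_ f) = R_ f ≤ f ≤ R̄ f = R̄ (R̄ f) = R_ (R̄ f)` (pointwise). -/
theorem equivalence_approx {M : Type*} [CompleteResiduatedMultilattice M]
    {X : Type*} [Nonempty X] (R : X → X → M)
    (hrefl : ∀ x, R x x = top)
    (hsymm : ∀ x y, R x y = R y x)
    (htrans : ∀ x y z, odot (R x z) (R z y) ≤ R x y)
    (lo up : (X → M) → X → M)
    (hlo : ∀ f x, IsGLB (Set.range fun y => himp (R x y) (f y)) (lo f x))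
    (hup : ∀ f x, IsLUB (Set.range fun y => odot (R x y) (f y)) (up f x))
    (f : X → M) :
    (∀ x, up (lo f) x = lo (lo f) x) ∧ (∀ x, lo (lo f) x = lo f x) ∧
    (∀ x, lo f x ≤ f x) ∧ (∀ x, f x ≤ up f x) ∧
    (∀ x, up f x = up (up f) x) ∧ (∀ x, up (up f) x = lo (up f) x) := by
  have lo_odot : ∀ g x y, odot (lo g x) (R x y) ≤ g y := fun g x y =>
    (adjoint _ _ _).2 ((hlo g x).1 ⟨y, rfl⟩)
  have le_up : ∀ g x y, odot (R x y) (g y) ≤ up g x := fun g x y => (hup g x).1 ⟨y, rfl⟩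
  have lo_le : ∀ g x, lo g x ≤ g x := fun g x => by
    simpa only [hrefl, odot_top] using lo_odot g x x
  have self_le_up : ∀ g x, g x ≤ up g x := fun g x => by
    simpa only [hrefl, odot_comm top, odot_top] using le_up g x x
  -- The direction of the adjunction `up ⊣ lo` that the proof uses.
  have up_le : ∀ g h : X → M, (∀ x, g x ≤ lo h x) → ∀ x, up g x ≤ h x := by
    intro g h hgh x
    refine (hup g x).2 ?_
    rintro _ ⟨y, rfl⟩
    calc odot (R x y) (g y) = odot (g y) (R y x) := by rw [odot_comm, hsymm x y]
      _ ≤ odot (lo h y) (R y x) := odot_le_odot_right (hgh y) _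
      _ ≤ h x := lo_odot h y x
  have lo_le_lo_lo : ∀ g x, lo g x ≤ lo (lo g) x := by
    intro g x
    refine (hlo (lo g) x).2 ?_
    rintro _ ⟨y, rfl⟩
    refine (adjoint _ _ _).1 ((hlo g y).2 ?_)
    rintro _ ⟨z, rfl⟩
    refine (adjoint _ _ _).1 ?_
    rw [odot_assoc]
    exact (odot_le_odot_left (htrans x z y) _).trans (lo_odot g x z)
  have up_le_lo_up : ∀ g x, up g x ≤ lo (up g) x := by
    intro g x
    refine (hlo (up g) x).2 ?_
    rintro _ ⟨y, rfl⟩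
    refine (hup g x).2 ?_
    rintro _ ⟨z, rfl⟩
    refine (adjoint _ _ _).1 ?_
    rw [odot_comm, ← odot_assoc, hsymm x y]
    exact (odot_le_odot_right (htrans y z x) _).trans (le_up g y z)
  have lo_lo : ∀ x, lo (lo f) x = lo f x := fun x => (lo_le _ x).antisymm (lo_le_lo_lo f x)
  have up_lo : ∀ x, up (lo f) x = lo f x := fun x =>
    (up_le _ _ (lo_le_lo_lo f) x).antisymm (self_le_up _ x)
  have up_up : ∀ x, up f x = up (up f) x := fun x =>
    (self_le_up _ x).antisymm (up_le _ _ (up_le_lo_up f) x)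
  have lo_up : ∀ x, lo (up f) x = up f x := fun x => (lo_le _ x).antisymm (up_le_lo_up f x)
  exact ⟨fun x => (up_lo x).trans (lo_lo x).symm, lo_lo, lo_le f, self_le_up f, up_up,
    fun x => (up_up x).symm.trans (lo_up x).symm⟩
end
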